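/- arXiv:2304.03026 — 4 statements merged into one kernel-verified Lean document; each statement's English description precedes it below -/
import Mathlib

section
/- Let I be a finite index set, g : I → ℝ², r : I → ℝ with r(i) ≥ 0 for all i, and let S, D ∈ ℝ². Then the following are equivalent: (a) there exists a continuous path u : [0,1] → ℝ² with u(0) = S, u(1) = D, and u(t) ∈ ⋃_{i∈I} B̄(g(i), r(i)) for all t ∈ [0,1]; (b) there exist k ≥ 1 and indices i₁,…,i_k ∈ I such that S ∈ B̄(g(i₁), r(i₁)), D ∈ B̄(g(i_k), r(i_k)), and dist(g(i_j), g(i_{j+1})) ≤ r(i_j) + r(i_{j+1}) for every 1 ≤ j ≤ k−1. -/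
lemma exists_seq_of_reflTransGen {I : Type*} {R : I → I → Prop} {a b : I}
    (h : Relation.ReflTransGen R a b) :
    ∃ (n : ℕ) (f : ℕ → I), f 0 = a ∧ f n = b ∧ ∀ j, j < n → R (f j) (f (j + 1)) := by
  induction h with
  | refl => exact ⟨0, fun _ => a, rfl, rfl, by intro j hj; omega⟩
  | @tail b c _ hbc ih =>
    obtain ⟨n, f, h0, hn, hf⟩ := ih
    refine ⟨n + 1, fun j => if j ≤ n then f j else c, by simp [h0], by simp, ?_⟩
    intro j hj
    rcases Nat.lt_or_ge j n with hlt | hge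
    · have h1 : j ≤ n := hlt.le
      have h2 : j + 1 ≤ n := hlt
      simp only [h1, h2, if_true]
      exact hf j hlt
    · have : j = n := by omega
      subst this
      simpa [hn] using hbc

/-- For finitely many closed coverage disks, there is a continuous path from `S`
to `D` staying in the union of the disks if and only if there is a finite base-station sequence
`seq` whose first disk contains `S`, whose last disk contains `D`, and whose consecutive disks
intersect (`dist ≤` sum of radii). -/
theorem joinedIn_union_closedBalls_iff_exists_sequence
    {I : Type*} [Fintype I]
    (g : I → EuclideanSpace ℝ (Fin 2)) (r : I → ℝ) (hr : ∀ i, 0 ≤ r i)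
    (S D : EuclideanSpace ℝ (Fin 2)) :
    JoinedIn (⋃ i, Metric.closedBall (g i) (r i)) S D ↔
      ∃ (k : ℕ) (hk : 1 ≤ k) (seq : Fin k → I),
        S ∈ Metric.closedBall (g (seq ⟨0, hk⟩)) (r (seq ⟨0, hk⟩)) ∧
        D ∈ Metric.closedBall (g (seq ⟨k - 1, Nat.sub_lt hk one_pos⟩))
              (r (seq ⟨k - 1, Nat.sub_lt hk one_pos⟩)) ∧
        ∀ (j : ℕ) (h : j + 1 < k),
          dist (g (seq ⟨j, by omega⟩)) (g (seq ⟨j + 1, h⟩)) ≤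
            r (seq ⟨j, by omega⟩) + r (seq ⟨j + 1, h⟩) := by
  constructor
  · intro hJ
    obtain ⟨γ, hγ⟩ := hJ
    let R : I → I → Prop := fun i j => dist (g i) (g j) ≤ r i + r j
    have hT : IsPreconnected (Set.range γ) := isPreconnected_range γ.continuous
    have hS : S ∈ Set.range γ := ⟨0, γ.source⟩
    have hD : D ∈ Set.range γ := ⟨1, γ.target⟩
    have hsub : ∀ x ∈ Set.range γ, ∃ i, x ∈ Metric.closedBall (g i) (r i) := by
      rintro x ⟨t, rfl⟩
      exact Set.mem_iUnion.1 (hγ t)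
    obtain ⟨a, ha⟩ := hsub S hS
    let A : Set (EuclideanSpace ℝ (Fin 2)) :=
      ⋃ i : {i // Relation.ReflTransGen R a i}, Metric.closedBall (g i) (r i)
    let B : Set (EuclideanSpace ℝ (Fin 2)) :=
      ⋃ i : {i // ¬ Relation.ReflTransGen R a i}, Metric.closedBall (g i) (r i)
    have hA : IsClosed A := isClosed_iUnion_of_finite fun _ => Metric.isClosed_closedBall
    have hB : IsClosed B := isClosed_iUnion_of_finite fun _ => Metric.isClosed_closedBall
    have hb : ∃ b, Relation.ReflTransGen R a b ∧ D ∈ Metric.closedBall (g b) (r b) := by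
      by_contra hcon
      obtain ⟨d, hd⟩ := hsub D hD
      have hda : ¬ Relation.ReflTransGen R a d := fun h => hcon ⟨d, h, hd⟩
      obtain ⟨z, _, hzA, hzB⟩ := isPreconnected_closed_iff.1 hT A B hA hB
        (by
          intro x hx
          obtain ⟨i, hi⟩ := hsub x hx
          by_cases h : Relation.ReflTransGen R a i
          · exact Or.inl (Set.mem_iUnion.2 ⟨⟨i, h⟩, hi⟩)
          · exact Or.inr (Set.mem_iUnion.2 ⟨⟨i, h⟩, hi⟩))
        ⟨S, hS, Set.mem_iUnion.2 ⟨⟨a, Relation.ReflTransGen.refl⟩, ha⟩⟩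
        ⟨D, hD, Set.mem_iUnion.2 ⟨⟨d, hda⟩, hd⟩⟩
      obtain ⟨⟨i, hi⟩, hzi⟩ := Set.mem_iUnion.1 hzA
      obtain ⟨⟨j, hj⟩, hzj⟩ := Set.mem_iUnion.1 hzB
      refine hj (hi.tail ?_)
      exact (dist_triangle_left (g i) (g j) z).trans (add_le_add hzi hzj)
    obtain ⟨b, hab, hDb⟩ := hb
    obtain ⟨n, f, h0, hn, hf⟩ := exists_seq_of_reflTransGen hab
    refine ⟨n + 1, by omega, fun j => f j, ?_, ?_, ?_⟩
    · simpa only [h0] using ha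
    · simpa only [Nat.add_sub_cancel, hn] using hDb
    · intro j h
      exact hf j (by omega)
  · rintro ⟨k, hk, seq, hS, hD, hd⟩
    have hball : ∀ i, ∀ x ∈ Metric.closedBall (g i) (r i), ∀ y ∈ Metric.closedBall (g i) (r i),
        JoinedIn (⋃ i, Metric.closedBall (g i) (r i)) x y := by
      intro i x hx y hy
      refine JoinedIn.mono (JoinedIn.of_segment_subset
        ((convex_closedBall (g i) (r i)).segment_subset hx hy)) ?_
      exact Set.subset_iUnion (fun i => Metric.closedBall (g i) (r i)) i
    have key : ∀ (j : ℕ) (hj : j < k), ∀ x ∈ Metric.closedBall (g (seq ⟨j, hj⟩)) (r (seq ⟨j, hj⟩)),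
        JoinedIn (⋃ i, Metric.closedBall (g i) (r i)) S x := by
      intro j
      induction j with
      | zero => intro hj x hx; exact hball _ S hS x hx
      | succ j ih =>
        intro hj x hx
        obtain ⟨z, hz1, hz2⟩ := exists_dist_le_le (hr _) (hr _)
          ((hd j hj).trans_eq (add_comm _ _))
        have hz1' : z ∈ Metric.closedBall (g (seq ⟨j, by omega⟩)) (r (seq ⟨j, by omega⟩)) := by
          rw [Metric.mem_closedBall, dist_comm]; exact hz1
        exact (ih (by omega) z hz1').trans (hball _ z hz2 x hx)
    exact key (k - 1) (Nat.sub_lt hk one_pos) D hD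
end

section
/- Let g₁, g₂ ∈ ℝ² and r₁, r₂ > 0 be such that the circles {x : dist(x,g₁) = r₁} and {x : dist(x,g₂) = r₂} intersect in exactly two distinct points m₁ ≠ m₂. Let p ∈ B̄(g₁,r₁) \ B̄(g₂,r₂) and q ∈ B̄(g₂,r₂) \ B̄(g₁,r₁), and suppose the closed segment [p,q] is contained in B̄(g₁,r₁) ∪ B̄(g₂,r₂). Then the segment [p,q] intersects the closed segment [m₁,m₂]. -/
theorem aux_nonneg (s : ℝ) (h : s * (s - 1) ≤ 0) : 0 ≤ s := by nlinarith [sq_nonneg s]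

theorem aux_le_one (s : ℝ) (h : s * (s - 1) ≤ 0) : s ≤ 1 := by nlinarith [sq_nonneg (s - 1)]

theorem aux_dist_sq (x y : EuclideanSpace ℝ (Fin 2)) :
    dist x y ^ 2 = (x 0 - y 0) ^ 2 + (x 1 - y 1) ^ 2 := by
  rw [EuclideanSpace.dist_eq, Real.sq_sqrt (by positivity)]
  simp [Fin.sum_univ_two, Real.dist_eq, sq_abs]

theorem aux_le (x y : EuclideanSpace ℝ (Fin 2)) (r : ℝ) (hr : 0 < r) :
    dist x y ≤ r ↔ (x 0 - y 0) ^ 2 + (x 1 - y 1) ^ 2 ≤ r ^ 2 := by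
  rw [← aux_dist_sq]
  exact (pow_le_pow_iff_left₀ dist_nonneg hr.le two_ne_zero).symm

set_option maxHeartbeats 1000000 in
/-- If the boundary circles of two disks intersect in exactly the two distinct
points `m₁ ≠ m₂`, `p` lies in the first disk only, `q` lies in the second disk only, and the
segment `[p,q]` stays inside the union of the two disks, then `[p,q]` meets the chord
`[m₁,m₂]`. -/
theorem segment_crossing_disks_meets_chord
    (g₁ g₂ m₁ m₂ p q : EuclideanSpace ℝ (Fin 2)) (r₁ r₂ : ℝ)
    (hr₁ : 0 < r₁) (hr₂ : 0 < r₂) (hm : m₁ ≠ m₂)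
    (hcirc : Metric.sphere g₁ r₁ ∩ Metric.sphere g₂ r₂ = {m₁, m₂})
    (hp : p ∈ Metric.closedBall g₁ r₁ \ Metric.closedBall g₂ r₂)
    (hq : q ∈ Metric.closedBall g₂ r₂ \ Metric.closedBall g₁ r₁)
    (hseg : segment ℝ p q ⊆ Metric.closedBall g₁ r₁ ∪ Metric.closedBall g₂ r₂) :
    (segment ℝ p q ∩ segment ℝ m₁ m₂).Nonempty := by
  have h1 : m₁ ∈ Metric.sphere g₁ r₁ ∩ Metric.sphere g₂ r₂ := by rw [hcirc]; simp
  have h2 : m₂ ∈ Metric.sphere g₁ r₁ ∩ Metric.sphere g₂ r₂ := by rw [hcirc]; simp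
  obtain ⟨h11, h12⟩ := h1
  obtain ⟨h21, h22⟩ := h2
  rw [Metric.mem_sphere] at h11 h12 h21 h22
  have e11 := aux_dist_sq m₁ g₁
  have e12 := aux_dist_sq m₁ g₂
  have e21 := aux_dist_sq m₂ g₁
  have e22 := aux_dist_sq m₂ g₂
  rw [h11] at e11
  rw [h12] at e12
  rw [h21] at e21
  rw [h22] at e22
  obtain ⟨hp1, hp2⟩ := hp
  obtain ⟨hq2, hq1⟩ := hq
  rw [Metric.mem_closedBall, aux_le _ _ _ hr₁] at hp1 hq1
  rw [Metric.mem_closedBall, aux_le _ _ _ hr₂] at hp2 hq2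
  push Not at hp2 hq1
  obtain ⟨A, hA⟩ : ∃ A, A = (p 0 - g₂ 0) ^ 2 + (p 1 - g₂ 1) ^ 2 - r₂ ^ 2
    - ((p 0 - g₁ 0) ^ 2 + (p 1 - g₁ 1) ^ 2 - r₁ ^ 2) := ⟨_, rfl⟩
  obtain ⟨B, hB⟩ : ∃ B, B = (q 0 - g₁ 0) ^ 2 + (q 1 - g₁ 1) ^ 2 - r₁ ^ 2
    - ((q 0 - g₂ 0) ^ 2 + (q 1 - g₂ 1) ^ 2 - r₂ ^ 2) := ⟨_, rfl⟩
  have hA0 : 0 < A := by linarith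
  have hB0 : 0 < B := by linarith
  obtain ⟨a, ha⟩ : ∃ a, a = B / (A + B) := ⟨_, rfl⟩
  obtain ⟨b, hb⟩ : ∃ b, b = A / (A + B) := ⟨_, rfl⟩
  have ha0 : 0 ≤ a := by rw [ha]; positivity
  have hb0 : 0 ≤ b := by rw [hb]; positivity
  have hab : a + b = 1 := by rw [ha, hb]; field_simp; ring
  have hAB : a * A = b * B := by rw [ha, hb]; field_simp
  have hx : a • p + b • q ∈ segment ℝ p q := ⟨a, b, ha0, hb0, hab, rfl⟩
  obtain ⟨x, hxe⟩ : ∃ x, x = a • p + b • q := ⟨_, rfl⟩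
  have x0 : x 0 = a * p 0 + b * q 0 := by simp [hxe]
  have x1 : x 1 = a * p 1 + b * q 1 := by simp [hxe]
  rw [← hxe] at hx
  have hb' : b = 1 - a := by linarith
  have hf : (x 0 - g₁ 0) ^ 2 + (x 1 - g₁ 1) ^ 2 - r₁ ^ 2
      = (x 0 - g₂ 0) ^ 2 + (x 1 - g₂ 1) ^ 2 - r₂ ^ 2 := by
    rw [hA, hB] at hAB
    rw [x0, x1]
    subst hb'
    linear_combination -hAB
  have hin : (x 0 - g₁ 0) ^ 2 + (x 1 - g₁ 1) ^ 2 ≤ r₁ ^ 2 := by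
    rcases hseg hx with h | h
    · rwa [Metric.mem_closedBall, aux_le _ _ _ hr₁] at h
    · rw [Metric.mem_closedBall, aux_le _ _ _ hr₂] at h
      linarith
  obtain ⟨u, hu⟩ : ∃ u, u = m₂ 0 - m₁ 0 := ⟨_, rfl⟩
  obtain ⟨v, hv⟩ : ∃ v, v = m₂ 1 - m₁ 1 := ⟨_, rfl⟩
  obtain ⟨c, hc⟩ : ∃ c, c = g₂ 0 - g₁ 0 := ⟨_, rfl⟩
  obtain ⟨d, hd⟩ : ∃ d, d = g₂ 1 - g₁ 1 := ⟨_, rfl⟩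
  have hN : 0 < u ^ 2 + v ^ 2 := by
    have hd := dist_pos.mpr hm.symm
    have := aux_dist_sq m₂ m₁
    rw [← hu, ← hv] at this
    rw [← this]; positivity
  have o1 : u * c + v * d = 0 := by
    subst hu hv hc hd; linear_combination (e11 - e12 - e21 + e22) / 2
  have o2 : (x 0 - m₁ 0) * c + (x 1 - m₁ 1) * d = 0 := by
    subst hc hd; linear_combination (e11 - e12 + hf) / 2
  have hcr : (x 0 - m₁ 0) * v = (x 1 - m₁ 1) * u := by
    have k1 : c * ((x 0 - m₁ 0) * v - (x 1 - m₁ 1) * u) = 0 := by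
      linear_combination v * o2 - (x 1 - m₁ 1) * o1
    have k2 : d * ((x 0 - m₁ 0) * v - (x 1 - m₁ 1) * u) = 0 := by
      linear_combination (x 0 - m₁ 0) * o1 - u * o2
    rcases mul_eq_zero.mp k1 with h | h
    · rcases mul_eq_zero.mp k2 with h' | h'
      · exfalso
        have g0 : g₂ 0 = g₁ 0 := by linarith
        have g1 : g₂ 1 = g₁ 1 := by linarith
        rw [g0, g1] at hA hB e12
        linarith
      · linarith
    · linarith
  obtain ⟨s, hs⟩ : ∃ s, s = ((x 0 - m₁ 0) * u + (x 1 - m₁ 1) * v) / (u ^ 2 + v ^ 2) := ⟨_, rfl⟩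
  have s0 : x 0 = m₁ 0 + s * u := by
    rw [hs]; field_simp; linear_combination v * hcr
  have s1 : x 1 = m₁ 1 + s * v := by
    rw [hs]; field_simp; linear_combination -u * hcr
  have hquad : s * (s - 1) * (u ^ 2 + v ^ 2) ≤ 0 := by
    have : s * (s - 1) * (u ^ 2 + v ^ 2)
        = (x 0 - g₁ 0) ^ 2 + (x 1 - g₁ 1) ^ 2 - r₁ ^ 2 := by
      rw [s0, s1, hu, hv]
      linear_combination (1 - s) * e11 + s * e21
    linarith
  have hss : s * (s - 1) ≤ 0 := by
    by_contra h
    push Not at h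
    have := mul_pos h hN
    linarith
  have hs0 : 0 ≤ s := aux_nonneg s hss
  have hs1 : s ≤ 1 := aux_le_one s hss
  refine ⟨x, hx, 1 - s, s, by linarith, hs0, by ring, ?_⟩
  ext i
  fin_cases i
  · simp; rw [s0, hu]; ring
  · simp; rw [s1, hv]; ring
end

section
/- Let g₁, g₂ ∈ ℝ² and r₁, r₂ > 0 be such that the circles {x : dist(x,g₁) = r₁} and {x : dist(x,g₂) = r₂} intersect in exactly two distinct points m₁ ≠ m₂, and let L be the (affine) line through m₁ and m₂. Then every point of (B̄(g₁,r₁) ∪ B̄(g₂,r₂)) ∩ L lies on the closed segment [m₁, m₂]; that is, (B̄(g₁,r₁) ∪ B̄(g₂,r₂)) ∩ L = [m₁, m₂]. -/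
/-- A point of the line of a chord lying in the closed ball has parameter in `[0, 1]`. -/
lemma chord_param_mem_Icc (g a b : EuclideanSpace ℝ (Fin 2)) (r t : ℝ) (hr : 0 < r) (hab : a ≠ b)
    (ha : a ∈ Metric.sphere g r) (hb : b ∈ Metric.sphere g r)
    (ht : AffineMap.lineMap a b t ∈ Metric.closedBall g r) : t ∈ Set.Icc (0 : ℝ) 1 := by
  rw [mem_sphere_iff_norm] at ha hb
  rw [mem_closedBall_iff_norm] at ht
  have e : (AffineMap.lineMap a b t : EuclideanSpace ℝ (Fin 2)) - g
      = (1 - t) • (a - g) + t • (b - g) := by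
    rw [AffineMap.lineMap_apply_module]
    module
  have e2 : b - a = (b - g) - (a - g) := by abel
  have hpos : 0 < ‖b - a‖ ^ 2 := by
    have : 0 < ‖b - a‖ := norm_pos_iff.mpr (sub_ne_zero.mpr hab.symm)
    positivity
  rw [e] at ht
  have h2 : ‖(1 - t) • (a - g) + t • (b - g)‖ ^ 2 ≤ r ^ 2 := by gcongr
  rw [norm_add_sq_real, norm_smul, norm_smul, mul_pow, mul_pow, ha, hb, inner_smul_left,
    inner_smul_right, Real.norm_eq_abs, Real.norm_eq_abs, sq_abs, sq_abs] at h2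
  rw [e2, norm_sub_sq_real, ha, hb, real_inner_comm] at hpos
  simp only [conj_trivial] at h2
  have key : 0 ≤ t * (1 - t) := by
    by_contra hneg
    push Not at hneg
    nlinarith
  constructor <;> nlinarith

/-- If the boundary circles of two disks intersect in exactly the two distinct
points `m₁ ≠ m₂`, then the union of the two closed disks meets the line through `m₁` and `m₂`
exactly in the closed chord `[m₁, m₂]`. -/
theorem union_closedBalls_inter_radical_line_eq_chord
    (g₁ g₂ m₁ m₂ : EuclideanSpace ℝ (Fin 2)) (r₁ r₂ : ℝ)
    (hr₁ : 0 < r₁) (hr₂ : 0 < r₂) (hm : m₁ ≠ m₂)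
    (hcirc : Metric.sphere g₁ r₁ ∩ Metric.sphere g₂ r₂ = {m₁, m₂}) :
    (Metric.closedBall g₁ r₁ ∪ Metric.closedBall g₂ r₂) ∩
        (affineSpan ℝ {m₁, m₂} : Set (EuclideanSpace ℝ (Fin 2))) =
      segment ℝ m₁ m₂ := by
  have h₁ : m₁ ∈ Metric.sphere g₁ r₁ ∩ Metric.sphere g₂ r₂ := by rw [hcirc]; simp
  have h₂ : m₂ ∈ Metric.sphere g₁ r₁ ∩ Metric.sphere g₂ r₂ := by rw [hcirc]; simp
  ext x
  constructor
  · rintro ⟨hx, hL⟩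
    obtain ⟨t, rfl⟩ := mem_affineSpan_pair_iff_exists_lineMap_eq.1 hL
    rw [segment_eq_image_lineMap]
    refine ⟨t, ?_, rfl⟩
    rcases hx with hx | hx
    · exact chord_param_mem_Icc g₁ m₁ m₂ r₁ t hr₁ hm h₁.1 h₂.1 hx
    · exact chord_param_mem_Icc g₂ m₁ m₂ r₂ t hr₂ hm h₁.2 h₂.2 hx
  · intro hx
    refine ⟨Or.inl ((convex_closedBall g₁ r₁).segment_subset
      (Metric.sphere_subset_closedBall h₁.1) (Metric.sphere_subset_closedBall h₂.1) hx), ?_⟩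
    rw [segment_eq_image_lineMap] at hx
    obtain ⟨t, -, rfl⟩ := hx
    exact AffineMap.lineMap_mem_affineSpan_pair t m₁ m₂
end

section
/- Let g₁, g₂ ∈ ℝ² and r₁, r₂ > 0 be such that the circles {x : dist(x,g₁) = r₁} and {x : dist(x,g₂) = r₂} intersect in exactly two distinct points m₁ ≠ m₂. Let p ∈ B̄(g₁,r₁) \ B̄(g₂,r₂), q ∈ B̄(g₂,r₂) \ B̄(g₁,r₁), and let u : [0,1] → ℝ² be a continuous path with u(0) = p, u(1) = q, and u(t) ∈ B̄(g₁,r₁) ∪ B̄(g₂,r₂) for all t. Then there exists t ∈ [0,1] with u(t) ∈ [m₁, m₂]. -/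
/-- Membership in a closed ball of the plane in coordinates. -/
theorem plane_dist_sq (x g : EuclideanSpace ℝ (Fin 2)) :
    dist x g ^ 2 = (x 0 - g 0) ^ 2 + (x 1 - g 1) ^ 2 := by
  rw [EuclideanSpace.dist_eq, Real.sq_sqrt (by positivity)]
  simp [Fin.sum_univ_two, Real.dist_eq, sq_abs]

/-- If the boundary circles of two disks intersect in exactly the two distinct
points `m₁ ≠ m₂`, then any continuous path from a point covered only by the first disk to a
point covered only by the second disk, staying in the union of the two disks, must cross the
chord `[m₁, m₂]`. -/
theorem path_crossing_disks_meets_chord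
    (g₁ g₂ m₁ m₂ p q : EuclideanSpace ℝ (Fin 2)) (r₁ r₂ : ℝ)
    (hr₁ : 0 < r₁) (hr₂ : 0 < r₂) (hm : m₁ ≠ m₂)
    (hcirc : Metric.sphere g₁ r₁ ∩ Metric.sphere g₂ r₂ = {m₁, m₂})
    (hp : p ∈ Metric.closedBall g₁ r₁ \ Metric.closedBall g₂ r₂)
    (hq : q ∈ Metric.closedBall g₂ r₂ \ Metric.closedBall g₁ r₁)
    (u : ℝ → EuclideanSpace ℝ (Fin 2)) (hu : ContinuousOn u (Set.Icc 0 1))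
    (hu0 : u 0 = p) (hu1 : u 1 = q)
    (humem : ∀ t ∈ Set.Icc (0 : ℝ) 1,
      u t ∈ Metric.closedBall g₁ r₁ ∪ Metric.closedBall g₂ r₂) :
    ∃ t ∈ Set.Icc (0 : ℝ) 1, u t ∈ segment ℝ m₁ m₂ := by
  have hm1 : m₁ ∈ Metric.sphere g₁ r₁ ∩ Metric.sphere g₂ r₂ := by rw [hcirc]; simp
  have hm2 : m₂ ∈ Metric.sphere g₁ r₁ ∩ Metric.sphere g₂ r₂ := by rw [hcirc]; simp
  have sph : ∀ x g : EuclideanSpace ℝ (Fin 2), ∀ r : ℝ, x ∈ Metric.sphere g r →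
      (x 0 - g 0) ^ 2 + (x 1 - g 1) ^ 2 = r ^ 2 := by
    intro x g r h
    rw [← plane_dist_sq, Metric.mem_sphere.1 h]
  have cb : ∀ x g : EuclideanSpace ℝ (Fin 2), ∀ r : ℝ, 0 < r → (x ∈ Metric.closedBall g r ↔
      (x 0 - g 0) ^ 2 + (x 1 - g 1) ^ 2 ≤ r ^ 2) := by
    intro x g r h
    rw [← plane_dist_sq, Metric.mem_closedBall, pow_le_pow_iff_left₀ dist_nonneg h.le two_ne_zero]
  have a1 := sph _ _ _ hm1.1
  have a2 := sph _ _ _ hm1.2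
  have b1 := sph _ _ _ hm2.1
  have b2 := sph _ _ _ hm2.2
  obtain ⟨hp1, hp2⟩ := hp
  obtain ⟨hq1, hq2⟩ := hq
  rw [cb _ _ _ hr₁] at hp1 hq2
  rw [cb _ _ _ hr₂] at hp2 hq1
  rw [not_le] at hp2 hq2
  have hc : ContinuousOn (fun t => (dist (u t) g₁ ^ 2 - r₁ ^ 2) - (dist (u t) g₂ ^ 2 - r₂ ^ 2))
      (Set.Icc 0 1) := by fun_prop
  have hz : (0 : ℝ) ∈ (fun t => (dist (u t) g₁ ^ 2 - r₁ ^ 2) - (dist (u t) g₂ ^ 2 - r₂ ^ 2)) ''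
      (Set.Icc 0 1) := by
    apply intermediate_value_Icc zero_le_one hc
    constructor
    · simp only [hu0, plane_dist_sq]; linarith
    · simp only [hu1, plane_dist_sq]; linarith
  obtain ⟨t, ht, hft⟩ := hz
  refine ⟨t, ht, ?_⟩
  simp only [plane_dist_sq] at hft
  have hx := humem t ht
  rw [Set.mem_union, cb _ _ _ hr₁, cb _ _ _ hr₂] at hx
  have hx1 : (u t 0 - g₁ 0) ^ 2 + (u t 1 - g₁ 1) ^ 2 ≤ r₁ ^ 2 := by
    rcases hx with h | h <;> linarith
  generalize u t = x at *
  have e1 : (g₁ 0 - g₂ 0) * (m₂ 0 - m₁ 0) + (g₁ 1 - g₂ 1) * (m₂ 1 - m₁ 1) = 0 := by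
    linarith
  have e2 : (g₁ 0 - g₂ 0) * (x 0 - m₁ 0) + (g₁ 1 - g₂ 1) * (x 1 - m₁ 1) = 0 := by
    linarith
  have cr : (x 0 - m₁ 0) * (m₂ 1 - m₁ 1) - (x 1 - m₁ 1) * (m₂ 0 - m₁ 0) = 0 := by
    by_contra hne
    have hA : g₁ 0 - g₂ 0 = 0 := by
      apply (mul_eq_zero.1 _).resolve_right hne
      linear_combination (m₂ 1 - m₁ 1) * e2 - (x 1 - m₁ 1) * e1
    have hB : g₁ 1 - g₂ 1 = 0 := by
      apply (mul_eq_zero.1 _).resolve_right hne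
      linear_combination (x 0 - m₁ 0) * e1 - (m₂ 0 - m₁ 0) * e2
    have hA' : g₁ 0 = g₂ 0 := by linarith
    have hB' : g₁ 1 = g₂ 1 := by linarith
    rw [hA', hB'] at a1 hp1 hq2
    linarith
  have hD : 0 < (m₂ 0 - m₁ 0) ^ 2 + (m₂ 1 - m₁ 1) ^ 2 := by
    rw [← plane_dist_sq]
    have := dist_pos.2 hm.symm
    positivity
  obtain ⟨s, hs⟩ : ∃ s : ℝ, s * ((m₂ 0 - m₁ 0) ^ 2 + (m₂ 1 - m₁ 1) ^ 2) =
      (x 0 - m₁ 0) * (m₂ 0 - m₁ 0) + (x 1 - m₁ 1) * (m₂ 1 - m₁ 1) :=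
    ⟨_, div_mul_cancel₀ _ hD.ne'⟩
  have h0 : x 0 = m₁ 0 + s * (m₂ 0 - m₁ 0) := by
    apply mul_right_cancel₀ hD.ne'
    linear_combination (m₂ 1 - m₁ 1) * cr - (m₂ 0 - m₁ 0) * hs
  have h1 : x 1 = m₁ 1 + s * (m₂ 1 - m₁ 1) := by
    apply mul_right_cancel₀ hD.ne'
    linear_combination -(m₂ 0 - m₁ 0) * cr - (m₂ 1 - m₁ 1) * hs
  have hss : s * (s - 1) ≤ 0 := by
    have : s * (s - 1) * ((m₂ 0 - m₁ 0) ^ 2 + (m₂ 1 - m₁ 1) ^ 2) ≤ 0 := by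
      rw [h0, h1] at hx1
      linear_combination hx1 + (s - 1) * a1 - s * b1
    exact nonpos_of_mul_nonpos_left this hD
  have s0 : 0 ≤ s := by
    clear * - hss
    nlinarith
  have s1 : s ≤ 1 := by
    clear * - hss
    nlinarith
  rw [segment_eq_image']
  refine ⟨s, ⟨s0, s1⟩, ?_⟩
  ext i
  fin_cases i
  · simp [h0]
  · simp [h1]
end
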